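/- arXiv:2203.03684 — 9 statements merged into one kernel-verified Lean document; each statement's English description precedes it below -/
import Mathlib

section
/- Let (X, τ) be a stable outcome on finite agent sets (I, J) with utility functions u, v : I × J → ℝ. Then X is a max-weight matching: for every matching X' on (I, J), Σ_{(i,j) ∈ X} (u(i,j) + v(i,j)) ≥ Σ_{(i,j) ∈ X'} (u(i,j) + v(i,j)). -/
/-!
A stable outcome is a feasible dual solution of the assignment linear program whose dual value equals
the primal value of `X`. Let `f i` and `g j` be the net payoffs (matched utility plus transfer).
They are nonnegative and satisfy `u i j + v i j ≤ f i + g j`, so the value of any matching `X'` is at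
most the sum of the net payoffs of the agents it matches, hence at most `∑ f + ∑ g`
(`sum_fst_le` and `sum_snd_le`). Since the transfers sum to zero, `∑ f + ∑ g` is the value of `X`
(`sum_matched_eq`).
-/

open Finset

noncomputable section
open scoped Classical

variable {I J : Type*} [Fintype I] [Fintype J] [DecidableEq I] [DecidableEq J]

/-- A matching on `(I, J)`: a set of pairs in which each side-1 agent and each
side-2 agent appears in at most one pair. -/
def IsMatching (X : Finset (I × J)) : Prop :=
  ∀ p ∈ X, ∀ q ∈ X, (p.1 = q.1 ∨ p.2 = q.2) → p = q

/-- The utility `u(i, X(i))` that agent `i` receives under matching `X`,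
with the convention that unmatched agents receive `0`. -/
def matchedU (u : I → J → ℝ) (X : Finset (I × J)) (i : I) : ℝ :=
  ∑ p ∈ X.filter (fun p => p.1 = i), u p.1 p.2

/-- The utility `v(X(j), j)` that agent `j` receives under matching `X`,
with the convention that unmatched agents receive `0`. -/
def matchedV (v : I → J → ℝ) (X : Finset (I × J)) (j : J) : ℝ :=
  ∑ p ∈ X.filter (fun p => p.2 = j), v p.1 p.2

/-- Total utility `∑_{(i,j) ∈ X} (u(i,j) + v(i,j))` of a matching `X`. -/
def matchValue (u v : I → J → ℝ) (X : Finset (I × J)) : ℝ :=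
  ∑ p ∈ X, (u p.1 p.2 + v p.1 p.2)

/-- Stability of the outcome `(X, τ)`: individual rationality and no blocking pairs. -/
def IsStable (u v : I → J → ℝ) (X : Finset (I × J)) (τ : I ⊕ J → ℝ) : Prop :=
  (∀ i : I, 0 ≤ matchedU u X i + τ (Sum.inl i)) ∧
  (∀ j : J, 0 ≤ matchedV v X j + τ (Sum.inr j)) ∧
  (∀ i : I, ∀ j : J,
    u i j + v i j ≤ (matchedU u X i + τ (Sum.inl i)) + (matchedV v X j + τ (Sum.inr j)))

/-- The collection of all matchings whose pairs lie in `I' × J'`. -/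
def matchingsOn (I' : Finset I) (J' : Finset J) : Finset (Finset (I × J)) :=
  (I' ×ˢ J').powerset.filter (fun X => IsMatching X)

lemma matchingsOn_nonempty (I' : Finset I) (J' : Finset J) :
    (matchingsOn I' J').Nonempty :=
  ⟨∅, by simp [matchingsOn, IsMatching]⟩

/-- The max-weight matching value on agent sets `(I', J')`. -/
def maxMatchVal (u v : I → J → ℝ) (I' : Finset I) (J' : Finset J) : ℝ :=
  (matchingsOn I' J').sup' (matchingsOn_nonempty I' J') (matchValue u v)

/-- Subset Instability of the outcome `(X, τ)` with respect to utilities `(u, v)`. -/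
def SI (u v : I → J → ℝ) (X : Finset (I × J)) (τ : I ⊕ J → ℝ) : ℝ :=
  (Finset.univ : Finset (Finset I × Finset J)).sup' Finset.univ_nonempty
    (fun P => maxMatchVal u v P.1 P.2
      - ∑ i ∈ P.1, (matchedU u X i + τ (Sum.inl i))
      - ∑ j ∈ P.2, (matchedV v X j + τ (Sum.inr j)))

/-- A matching meets each side-1 agent at most once, so nonnegative payoffs summed along it are
bounded by their total. -/
lemma sum_fst_le {X : Finset (I × J)} (hX : IsMatching X) (f : I → ℝ) (hf : ∀ i, 0 ≤ f i) :
    ∑ p ∈ X, f p.1 ≤ ∑ i, f i := by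
  rw [← Finset.sum_image (f := f) (g := Prod.fst) fun p hp q hq h => hX p hp q hq (Or.inl h)]
  exact Finset.sum_le_univ_sum_of_nonneg hf

/-- The side-2 counterpart of `sum_fst_le`. -/
lemma sum_snd_le {X : Finset (I × J)} (hX : IsMatching X) (g : J → ℝ) (hg : ∀ j, 0 ≤ g j) :
    ∑ p ∈ X, g p.2 ≤ ∑ j, g j := by
  rw [← Finset.sum_image (f := g) (g := Prod.snd) fun p hp q hq h => hX p hp q hq (Or.inr h)]
  exact Finset.sum_le_univ_sum_of_nonneg hg

lemma sum_matched_eq (u v : I → J → ℝ) (X : Finset (I × J)) :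
    ∑ i, matchedU u X i + ∑ j, matchedV v X j = matchValue u v X := by
  unfold matchedU matchedV matchValue
  rw [Finset.sum_add_distrib, Finset.sum_fiberwise, Finset.sum_fiberwise]

/-- a stable outcome `(X, τ)` is a max-weight matching. -/
theorem stable_outcome_is_max_weight (u v : I → J → ℝ) (X : Finset (I × J))
    (τ : I ⊕ J → ℝ) (hX : IsMatching X) (hτ : ∑ a : I ⊕ J, τ a = 0)
    (hstable : IsStable u v X τ) :
    ∀ X' : Finset (I × J), IsMatching X' → matchValue u v X' ≤ matchValue u v X := by
  intro X' hX'
  obtain ⟨hf, hg, hfg⟩ := hstable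
  have hle : matchValue u v X' ≤ ∑ p ∈ X', ((matchedU u X p.1 + τ (Sum.inl p.1)) +
      (matchedV v X p.2 + τ (Sum.inr p.2))) :=
    Finset.sum_le_sum fun p _ => hfg p.1 p.2
  rw [Finset.sum_add_distrib] at hle
  have h1 := sum_fst_le hX' _ hf
  have h2 := sum_snd_le hX' _ hg
  rw [Finset.sum_add_distrib (s := Finset.univ)] at h1 h2
  rw [Fintype.sum_sum_type] at hτ
  linarith [sum_matched_eq u v X]
end
end

section
/- For any matching X on finite agent sets (I, J) with utilities u, v : I × J → ℝ and any transfer τ, the Subset Instability satisfies SI(X, τ; I, J, u, v) ≥ 0, and SI(X, τ; I, J, u, v) = 0 if and only if the outcome (X, τ) is stable. -/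
/-!
Write `a i` and `b j` for the net payoffs (matched utility plus transfer) of the agents. By
`SI_le_iff`, `SI ≤ c` says that no coalition `(I', J')` gains more than `c` over its current payoffs
by rematching internally.

* The empty coalition gains `0`, so `SI ≥ 0`, and `SI = 0` amounts to `SI ≤ 0`.
* If `SI ≤ 0`, the coalitions `({i}, ∅)`, `(∅, {j})` and `({i}, {j})`, the last one with the matching
  `{(i, j)}`, give the three stability conditions.
* If the outcome is stable, summing the no-blocking inequality over the pairs of a matching on
  `(I', J')` bounds its value by the payoffs of the matched agents. Each of these is counted once,
  and the remaining members of the coalition have nonnegative payoffs; this is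
  `matchValue_le_of_dual`, the weak duality of the assignment problem.
-/

open Finset

noncomputable section
open scoped Classical

variable {I J : Type*} [Fintype I] [Fintype J] [DecidableEq I] [DecidableEq J]

/-- `SI ≤ c` unfolded: both maxima become universal quantifiers over coalitions and matchings. -/
lemma SI_le_iff (u v : I → J → ℝ) (X : Finset (I × J)) (τ : I ⊕ J → ℝ) (c : ℝ) :
    SI u v X τ ≤ c ↔ ∀ (I' : Finset I) (J' : Finset J) (Y : Finset (I × J)),
      Y ⊆ I' ×ˢ J' → IsMatching Y →
      matchValue u v Y ≤ c + ∑ i ∈ I', (matchedU u X i + τ (Sum.inl i))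
        + ∑ j ∈ J', (matchedV v X j + τ (Sum.inr j)) := by
  simp only [SI, maxMatchVal, Finset.sup'_le_iff, sub_le_iff_le_add, matchingsOn,
    Finset.mem_filter, Finset.mem_powerset, Finset.mem_univ, true_implies, Prod.forall, and_imp]
  refine forall_congr' fun I' => forall_congr' fun J' => forall_congr' fun Y =>
    imp_congr_right fun _ => imp_congr_right fun _ => ?_
  rw [add_right_comm]

/-- Weak duality: nonnegative payoffs `a`, `b` that cover the surplus of every pair bound the value
of every matching on `(I', J')`. -/
lemma matchValue_le_of_dual (u v : I → J → ℝ) (a : I → ℝ) (b : J → ℝ)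
    (ha : ∀ i, 0 ≤ a i) (hb : ∀ j, 0 ≤ b j) (hab : ∀ i j, u i j + v i j ≤ a i + b j)
    (I' : Finset I) (J' : Finset J) (Y : Finset (I × J))
    (hY : Y ⊆ I' ×ˢ J') (hM : IsMatching Y) :
    matchValue u v Y ≤ ∑ i ∈ I', a i + ∑ j ∈ J', b j := by
  have hfst : ∑ p ∈ Y, a p.1 ≤ ∑ i ∈ I', a i := by
    rw [← Finset.sum_image (g := Prod.fst) (f := a) fun p hp q hq h => hM p hp q hq (Or.inl h)]
    refine Finset.sum_le_sum_of_subset_of_nonneg ?_ fun i _ _ => ha i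
    exact Finset.image_subset_iff.2 fun p hp => (Finset.mem_product.1 (hY hp)).1
  have hsnd : ∑ p ∈ Y, b p.2 ≤ ∑ j ∈ J', b j := by
    rw [← Finset.sum_image (g := Prod.snd) (f := b) fun p hp q hq h => hM p hp q hq (Or.inr h)]
    refine Finset.sum_le_sum_of_subset_of_nonneg ?_ fun j _ _ => hb j
    exact Finset.image_subset_iff.2 fun p hp => (Finset.mem_product.1 (hY hp)).2
  calc matchValue u v Y ≤ ∑ p ∈ Y, (a p.1 + b p.2) := Finset.sum_le_sum fun p _ => hab p.1 p.2
    _ = ∑ p ∈ Y, a p.1 + ∑ p ∈ Y, b p.2 := Finset.sum_add_distrib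
    _ ≤ _ := add_le_add hfst hsnd

/-- Subset Instability is nonnegative, and vanishes iff `(X, τ)` is stable. -/
theorem SI_nonneg_and_eq_zero_iff_stable (u v : I → J → ℝ) (X : Finset (I × J))
    (τ : I ⊕ J → ℝ) (hX : IsMatching X) (hτ : ∑ a : I ⊕ J, τ a = 0) :
    0 ≤ SI u v X τ ∧ (SI u v X τ = 0 ↔ IsStable u v X τ) := by
  have hnonneg : 0 ≤ SI u v X τ := by
    have h := (SI_le_iff u v X τ _).1 le_rfl ∅ ∅ ∅ (by simp) (by simp [IsMatching])
    simpa [matchValue] using h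
  refine ⟨hnonneg, fun h0 => ?_, fun hs => le_antisymm ?_ hnonneg⟩
  · have h := (SI_le_iff u v X τ 0).1 h0.le
    refine ⟨fun i => ?_, fun j => ?_, fun i j => ?_⟩
    · simpa [matchValue] using h {i} ∅ ∅ (by simp) (by simp [IsMatching])
    · simpa [matchValue] using h ∅ {j} ∅ (by simp) (by simp [IsMatching])
    · simpa [matchValue] using h {i} {j} {(i, j)} (by simp) (by simp [IsMatching])
  · obtain ⟨ha, hb, hab⟩ := hs
    refine (SI_le_iff u v X τ 0).2 fun I' J' Y hY hM => ?_
    rw [zero_add]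
    exact matchValue_le_of_dual u v _ _ ha hb hab I' J' Y hY hM
end
end

section
/- Subset Instability is Lipschitz continuous in the utility functions with respect to the ℓ∞ norm: for any matching X on finite agent sets (I, J), any transfer τ, and any two pairs of utility functions (u, v) and (ũ, ṽ) from I × J to ℝ, |SI(X, τ; I, J, u, v) − SI(X, τ; I, J, ũ, ṽ)| ≤ 2 ( Σ_{i ∈ I} max_{j ∈ J} |u(i, j) − ũ(i, j)| + Σ_{j ∈ J} max_{i ∈ I} |v(i, j) − ṽ(i, j)| ). -/
/-!
Fix coalitions `I'`, `J'` and a matching `Y` on them. Replacing `(u, v)` by `(ut, vt)` changes the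
value of `Y` by at most `D = ∑ i, max_j |u - ut| + ∑ j, max_i |v - vt|`, because each agent occurs in
at most one pair of `Y` (`matchValue_le`). For the same reason it changes what each agent gets from
`X` by at most that agent's term of `D`, so the coalition's payoff changes by at most `D` in total
(`matchedU_le`, `matchedV_le`). Maximizing over `Y`, `I'` and `J'` gives `SI u v ≤ SI ut vt + 2 * D`
(`SI_le`), and exchanging the two pairs of utilities gives the other inequality. The transfers cancel.
-/

open Finset

noncomputable section
open scoped Classical

variable {I J : Type*} [Fintype I] [Fintype J] [DecidableEq I] [DecidableEq J]

lemma abs_sub_le_iSup_right (u ut : I → J → ℝ) (i : I) (j : J) :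
    |u i j - ut i j| ≤ ⨆ j : J, |u i j - ut i j| :=
  le_ciSup (f := fun j => |u i j - ut i j|) (Set.finite_range _).bddAbove j

lemma abs_sub_le_iSup_left (v vt : I → J → ℝ) (i : I) (j : J) :
    |v i j - vt i j| ≤ ⨆ i : I, |v i j - vt i j| :=
  le_ciSup (f := fun i => |v i j - vt i j|) (Set.finite_range _).bddAbove i

/-- A sum over a finite set with at most one element is bounded by any nonnegative bound on its
terms. -/
lemma sum_le_of_subsingleton {α : Type*} (s : Finset α) (f : α → ℝ) (c : ℝ) (hc : 0 ≤ c)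
    (hs : ∀ p ∈ s, ∀ q ∈ s, p = q) (hf : ∀ p ∈ s, f p ≤ c) : ∑ p ∈ s, f p ≤ c := by
  rcases s.eq_empty_or_nonempty with rfl | ⟨a, ha⟩
  · simpa using hc
  · have : s = {a} := Finset.eq_singleton_iff_unique_mem.2 ⟨ha, fun q hq => hs q hq a ha⟩
    rw [this, Finset.sum_singleton]
    exact hf a ha

lemma matchedU_le (u ut : I → J → ℝ) (X : Finset (I × J)) (hX : IsMatching X) (i : I) :
    matchedU ut X i ≤ matchedU u X i + ⨆ j : J, |u i j - ut i j| := by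
  have h := sum_le_of_subsingleton (X.filter (fun p => p.1 = i))
    (fun p => ut p.1 p.2 - u p.1 p.2) (⨆ j : J, |u i j - ut i j|)
    (Real.iSup_nonneg fun _ => abs_nonneg _)
    (by
      intro p hp q hq
      rw [Finset.mem_filter] at hp hq
      exact hX p hp.1 q hq.1 (Or.inl (hp.2.trans hq.2.symm)))
    (by
      rintro ⟨a, b⟩ hp
      obtain rfl : a = i := (Finset.mem_filter.1 hp).2
      have h1 := abs_sub_le_iSup_right u ut a b
      have h2 := neg_abs_le (u a b - ut a b)
      dsimp only
      linarith)
  rw [Finset.sum_sub_distrib] at h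
  unfold matchedU
  linarith

lemma matchedV_le (v vt : I → J → ℝ) (X : Finset (I × J)) (hX : IsMatching X) (j : J) :
    matchedV vt X j ≤ matchedV v X j + ⨆ i : I, |v i j - vt i j| := by
  have h := sum_le_of_subsingleton (X.filter (fun p => p.2 = j))
    (fun p => vt p.1 p.2 - v p.1 p.2) (⨆ i : I, |v i j - vt i j|)
    (Real.iSup_nonneg fun _ => abs_nonneg _)
    (by
      intro p hp q hq
      rw [Finset.mem_filter] at hp hq
      exact hX p hp.1 q hq.1 (Or.inr (hp.2.trans hq.2.symm)))
    (by
      rintro ⟨a, b⟩ hp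
      obtain rfl : b = j := (Finset.mem_filter.1 hp).2
      have h1 := abs_sub_le_iSup_left v vt a b
      have h2 := neg_abs_le (v a b - vt a b)
      dsimp only
      linarith)
  rw [Finset.sum_sub_distrib] at h
  unfold matchedV
  linarith

/-- If `g` is injective on `s`, then summing a nonnegative function along `g` over `s` gives at most
the full sum. It is applied to the two projections of a matching. -/
lemma sum_comp_le_sum_univ {α β : Type*} [Fintype β] (s : Finset α) (g : α → β)
    (f : β → ℝ) (hf : ∀ b, 0 ≤ f b) (hg : Set.InjOn g s) : ∑ p ∈ s, f (g p) ≤ ∑ b, f b := by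
  rw [← Finset.sum_image hg]
  exact Finset.sum_le_sum_of_subset_of_nonneg (Finset.subset_univ _) fun b _ _ => hf b

lemma matchValue_le (u v ut vt : I → J → ℝ) (Y : Finset (I × J)) (hY : IsMatching Y) :
    matchValue u v Y ≤ matchValue ut vt Y +
      ((∑ i : I, ⨆ j : J, |u i j - ut i j|) + (∑ j : J, ⨆ i : I, |v i j - vt i j|)) := by
  have h1 := sum_comp_le_sum_univ Y Prod.fst (fun i => ⨆ j : J, |u i j - ut i j|)
    (fun _ => Real.iSup_nonneg fun _ => abs_nonneg _)
    (fun p hp q hq h => hY p hp q hq (Or.inl h))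
  have h2 := sum_comp_le_sum_univ Y Prod.snd (fun j => ⨆ i : I, |v i j - vt i j|)
    (fun _ => Real.iSup_nonneg fun _ => abs_nonneg _)
    (fun p hp q hq h => hY p hp q hq (Or.inr h))
  have h3 : matchValue u v Y ≤ ∑ p ∈ Y, ((ut p.1 p.2 + vt p.1 p.2) +
      ((⨆ j : J, |u p.1 j - ut p.1 j|) + ⨆ i : I, |v i p.2 - vt i p.2|)) := by
    refine Finset.sum_le_sum fun p _ => ?_
    have := abs_sub_le_iSup_right u ut p.1 p.2
    have := abs_sub_le_iSup_left v vt p.1 p.2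
    have := le_abs_self (u p.1 p.2 - ut p.1 p.2)
    have := le_abs_self (v p.1 p.2 - vt p.1 p.2)
    linarith
  unfold matchValue at h3 ⊢
  simp only [Finset.sum_add_distrib] at h3 ⊢
  linarith

lemma maxMatchVal_le (u v ut vt : I → J → ℝ) (I' : Finset I) (J' : Finset J) :
    maxMatchVal u v I' J' ≤ maxMatchVal ut vt I' J' +
      ((∑ i : I, ⨆ j : J, |u i j - ut i j|) + (∑ j : J, ⨆ i : I, |v i j - vt i j|)) := by
  refine Finset.sup'_le _ _ fun Y hY => ?_
  have h1 := matchValue_le u v ut vt Y (Finset.mem_filter.1 hY).2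
  have h2 : matchValue ut vt Y ≤ maxMatchVal ut vt I' J' := Finset.le_sup' (matchValue ut vt) hY
  linarith

/-- The one-sided estimate; the Lipschitz bound is this and its mirror image. -/
lemma SI_le (u v ut vt : I → J → ℝ) (X : Finset (I × J)) (τ : I ⊕ J → ℝ) (hX : IsMatching X) :
    SI u v X τ ≤ SI ut vt X τ +
      2 * ((∑ i : I, ⨆ j : J, |u i j - ut i j|) + (∑ j : J, ⨆ i : I, |v i j - vt i j|)) := by
  refine Finset.sup'_le _ _ fun P _ => ?_
  have h0 : maxMatchVal ut vt P.1 P.2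
      - ∑ i ∈ P.1, (matchedU ut X i + τ (Sum.inl i))
      - ∑ j ∈ P.2, (matchedV vt X j + τ (Sum.inr j)) ≤ SI ut vt X τ :=
    Finset.le_sup' (fun P : Finset I × Finset J => maxMatchVal ut vt P.1 P.2
      - ∑ i ∈ P.1, (matchedU ut X i + τ (Sum.inl i))
      - ∑ j ∈ P.2, (matchedV vt X j + τ (Sum.inr j))) (Finset.mem_univ P)
  have h1 := maxMatchVal_le u v ut vt P.1 P.2
  have h2 : ∑ i ∈ P.1, matchedU ut X i ≤
      ∑ i ∈ P.1, (matchedU u X i + ⨆ j : J, |u i j - ut i j|) :=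
    Finset.sum_le_sum fun i _ => matchedU_le u ut X hX i
  have h3 : ∑ j ∈ P.2, matchedV vt X j ≤
      ∑ j ∈ P.2, (matchedV v X j + ⨆ i : I, |v i j - vt i j|) :=
    Finset.sum_le_sum fun j _ => matchedV_le v vt X hX j
  have h4 : ∑ i ∈ P.1, (⨆ j : J, |u i j - ut i j|) ≤ ∑ i : I, ⨆ j : J, |u i j - ut i j| :=
    Finset.sum_le_sum_of_subset_of_nonneg (Finset.subset_univ _)
      fun _ _ _ => Real.iSup_nonneg fun _ => abs_nonneg _
  have h5 : ∑ j ∈ P.2, (⨆ i : I, |v i j - vt i j|) ≤ ∑ j : J, ⨆ i : I, |v i j - vt i j| :=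
    Finset.sum_le_sum_of_subset_of_nonneg (Finset.subset_univ _)
      fun _ _ _ => Real.iSup_nonneg fun _ => abs_nonneg _
  simp only [Finset.sum_add_distrib] at h0 h2 h3 ⊢
  linarith

/-- Subset Instability is Lipschitz in the utilities w.r.t. the ℓ∞ norm. -/
theorem SI_lipschitz (u v ut vt : I → J → ℝ) (X : Finset (I × J)) (τ : I ⊕ J → ℝ)
    (hX : IsMatching X) (hτ : ∑ a : I ⊕ J, τ a = 0) :
    |SI u v X τ - SI ut vt X τ| ≤
      2 * ((∑ i : I, ⨆ j : J, |u i j - ut i j|) + (∑ j : J, ⨆ i : I, |v i j - vt i j|)) := by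
  have h1 := SI_le u v ut vt X τ hX
  have h2 := SI_le ut vt u v X τ hX
  simp only [abs_sub_comm (ut _ _), abs_sub_comm (vt _ _)] at h2
  rw [abs_le]
  constructor <;> linarith
end
end

section
/- For any matching X on finite agent sets (I, J) with utilities u, v : I × J → ℝ and any transfer τ (so Σ_{a ∈ I ∪ J} τ(a) = 0), Subset Instability is at least the utility difference: SI(X, τ; I, J, u, v) ≥ [ max_{X'} Σ_{(i,j) ∈ X'} (u(i,j) + v(i,j)) ] − Σ_{(i,j) ∈ X} (u(i,j) + v(i,j)), where the max is over all matchings X' on (I, J). -/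
/-!
Taking the coalition of all agents in the maximum defining `SI` gives the utility difference
exactly: the transfers sum to zero, and summing `matchedU` and `matchedV` over all agents
regroups the pairs of `X` by their first and second coordinates (`Finset.sum_fiberwise`).
-/

open Finset

noncomputable section
open scoped Classical

variable {I J : Type*} [Fintype I] [Fintype J] [DecidableEq I] [DecidableEq J]

/-- Subset Instability is at least the utility difference. -/
theorem SI_ge_utility_difference (u v : I → J → ℝ) (X : Finset (I × J))
    (τ : I ⊕ J → ℝ) (hX : IsMatching X) (hτ : ∑ a : I ⊕ J, τ a = 0) :
    maxMatchVal u v Finset.univ Finset.univ - matchValue u v X ≤ SI u v X τ := by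
  have hU : ∑ i, matchedU u X i = ∑ p ∈ X, u p.1 p.2 := by
    unfold matchedU
    exact Finset.sum_fiberwise X (fun p => p.1) (fun p => u p.1 p.2)
  have hV : ∑ j, matchedV v X j = ∑ p ∈ X, v p.1 p.2 := by
    unfold matchedV
    exact Finset.sum_fiberwise X (fun p => p.2) (fun p => v p.1 p.2)
  rw [Fintype.sum_sum_type] at hτ
  -- The grand coalition `(univ, univ)` is one of the candidates in the maximum defining `SI`.
  have hSI : maxMatchVal u v Finset.univ Finset.univ
      - ∑ i, (matchedU u X i + τ (Sum.inl i))
      - ∑ j, (matchedV v X j + τ (Sum.inr j)) ≤ SI u v X τ := by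
    unfold SI
    exact Finset.le_sup' (fun P : Finset I × Finset J => maxMatchVal u v P.1 P.2
      - ∑ i ∈ P.1, (matchedU u X i + τ (Sum.inl i))
      - ∑ j ∈ P.2, (matchedV v X j + τ (Sum.inr j)))
      (Finset.mem_univ (Finset.univ, Finset.univ))
  rw [Finset.sum_add_distrib, Finset.sum_add_distrib, hU, hV] at hSI
  unfold matchValue
  rw [Finset.sum_add_distrib]
  linarith
end
end

section
/- Let I and J be finite agent sets and let u, v, û, v̂ : I × J → ℝ satisfy u ≤ û and v ≤ v̂ pointwise on I × J. Let (X̂, τ̂) be a stable outcome on (I, J) with respect to the utility functions (û, v̂). Then the Subset Instability of (X̂, τ̂) with respect to the true utilities (u, v) satisfies SI(X̂, τ̂; I, J, u, v) ≤ Σ_{i ∈ I} |û(i, X̂(i)) − u(i, X̂(i))| + Σ_{j ∈ J} |v̂(X̂(j), j) − v(X̂(j), j)| (with the convention that all utilities vanish at unmatched agents, these sums equal the sum over matched pairs (i,j) ∈ X̂ of the utility gaps). -/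
/-!
Write `a i` and `b j` for the net payoffs (utility plus transfer) under the optimistic utilities
`(uh, vh)`. Stability says that `a, b ≥ 0` and `uh i j + vh i j ≤ a i + b j`, i.e. `(a, b)` is
dual feasible for the assignment problem. By weak duality (`matchValue_le_of_dual_feasible`) every
matching on a coalition `(I', J')` has optimistic value, hence also true value, at most
`∑ i ∈ I', a i + ∑ j ∈ J', b j`. Subtracting the coalition's true payoffs cancels the transfers and
leaves the sum of the utility gaps over the coalition, which is at most the sum of their absolute
values over all agents.
-/

open Finset

noncomputable section
open scoped Classical

variable {I J : Type*} [Fintype I] [Fintype J] [DecidableEq I] [DecidableEq J]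

/-- Weak duality for the assignment problem on the coalition `(I', J')`: a nonnegative dual
solution `(a, b)` bounds the value of every matching. -/
lemma matchValue_le_of_dual_feasible (u v : I → J → ℝ) (a : I → ℝ) (b : J → ℝ)
    (ha : ∀ i, 0 ≤ a i) (hb : ∀ j, 0 ≤ b j) (hab : ∀ i j, u i j + v i j ≤ a i + b j)
    {I' : Finset I} {J' : Finset J} {X : Finset (I × J)} (hX : X ∈ matchingsOn I' J') :
    matchValue u v X ≤ ∑ i ∈ I', a i + ∑ j ∈ J', b j := by
  simp only [matchingsOn, mem_filter, mem_powerset] at hX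
  obtain ⟨hsub, hm⟩ := hX
  have h1 : ∑ p ∈ X, a p.1 ≤ ∑ i ∈ I', a i := by
    rw [← sum_image (f := a) (g := Prod.fst) (fun p hp q hq h => hm p hp q hq (Or.inl h))]
    refine sum_le_sum_of_subset_of_nonneg ?_ (fun i _ _ => ha i)
    exact image_subset_iff.2 fun p hp => (mem_product.1 (hsub hp)).1
  have h2 : ∑ p ∈ X, b p.2 ≤ ∑ j ∈ J', b j := by
    rw [← sum_image (f := b) (g := Prod.snd) (fun p hp q hq h => hm p hp q hq (Or.inr h))]
    refine sum_le_sum_of_subset_of_nonneg ?_ (fun j _ _ => hb j)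
    exact image_subset_iff.2 fun p hp => (mem_product.1 (hsub hp)).2
  calc matchValue u v X ≤ ∑ p ∈ X, (a p.1 + b p.2) := sum_le_sum fun p _ => hab p.1 p.2
    _ = ∑ p ∈ X, a p.1 + ∑ p ∈ X, b p.2 := sum_add_distrib
    _ ≤ _ := add_le_add h1 h2

/-- The transfers `t` cancel from a difference of coalition payoffs. -/
lemma sum_payoff_sub_le {A : Type*} [Fintype A] (S : Finset A) (f g t : A → ℝ) :
    ∑ x ∈ S, (f x + t x) - ∑ x ∈ S, (g x + t x) ≤ ∑ x, |f x - g x| := by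
  rw [← sum_sub_distrib]
  calc ∑ x ∈ S, (f x + t x - (g x + t x)) ≤ ∑ x ∈ S, |f x - g x| :=
        sum_le_sum fun x _ => by rw [add_sub_add_right_eq_sub]; exact le_abs_self _
    _ ≤ _ := sum_le_sum_of_subset_of_nonneg (subset_univ S) fun x _ _ => abs_nonneg _

/-- the Subset Instability w.r.t. the true utilities of a matching that is
stable w.r.t. optimistic utilities is bounded by the sum of the utility gaps. -/
theorem SI_le_utility_gaps (u v uh vh : I → J → ℝ)
    (hu : ∀ i j, u i j ≤ uh i j) (hv : ∀ i j, v i j ≤ vh i j)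
    (Xh : Finset (I × J)) (τh : I ⊕ J → ℝ) (hXh : IsMatching Xh)
    (hτ : ∑ a : I ⊕ J, τh a = 0) (hstable : IsStable uh vh Xh τh) :
    SI u v Xh τh ≤
      (∑ i : I, |matchedU uh Xh i - matchedU u Xh i|) +
        ∑ j : J, |matchedV vh Xh j - matchedV v Xh j| := by
  obtain ⟨ha, hb, hab⟩ := hstable
  refine sup'_le _ _ fun P _ => ?_
  have hval : maxMatchVal u v P.1 P.2 ≤
      ∑ i ∈ P.1, (matchedU uh Xh i + τh (Sum.inl i)) +
        ∑ j ∈ P.2, (matchedV vh Xh j + τh (Sum.inr j)) :=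
    sup'_le _ _ fun X hX => matchValue_le_of_dual_feasible u v _ _ ha hb
      (fun i j => (add_le_add (hu i j) (hv i j)).trans (hab i j)) hX
  have hI := sum_payoff_sub_le P.1 (matchedU uh Xh) (matchedU u Xh) (fun i => τh (Sum.inl i))
  have hJ := sum_payoff_sub_le P.2 (matchedV vh Xh) (matchedV v Xh) (fun j => τh (Sum.inr j))
  linarith
end
end

section
/- The max-weight matching value is Lipschitz in the utility functions with respect to the sup norm: for finite agent sets I, J and utility pairs (u₁, v₁) and (u₂, v₂) from I × J to ℝ, |M(u₁, v₁) − M(u₂, v₂)| ≤ min(|I|, |J|) · ( max_{(i,j) ∈ I × J} |u₁(i,j) − u₂(i,j)| + max_{(i,j) ∈ I × J} |v₁(i,j) − v₂(i,j)| ). -/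
/-!
A matching has at most `min |I| |J|` pairs, since both coordinate projections are injective on it.
Replacing `(u₁, v₁)` by `(u₂, v₂)` changes the weight of a single pair by at most
`D = ‖u₁ - u₂‖_∞ + ‖v₁ - v₂‖_∞`, hence the value of every matching by at most `min |I| |J| * D`
(`matchValue_le_add`), and this uniform bound passes to the maximum over matchings
(`maxMatchVal_le_add`). The absolute value follows by exchanging the two utility pairs.
-/

open Finset

noncomputable section
open scoped Classical

variable {I J : Type*} [Fintype I] [Fintype J] [DecidableEq I] [DecidableEq J]

lemma IsMatching.card_le {X : Finset (I × J)} (hX : IsMatching X) :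
    (X.card : ℝ) ≤ min (Fintype.card I : ℝ) (Fintype.card J : ℝ) := by
  refine le_min ?_ ?_
  · have h : X.card ≤ (Finset.univ : Finset I).card :=
      Finset.card_le_card_of_injOn Prod.fst (fun _ _ => Finset.mem_coe.2 (Finset.mem_univ _))
        (fun p hp q hq h => hX p hp q hq (Or.inl h))
    exact_mod_cast h
  · have h : X.card ≤ (Finset.univ : Finset J).card :=
      Finset.card_le_card_of_injOn Prod.snd (fun _ _ => Finset.mem_coe.2 (Finset.mem_univ _))
        (fun p hp q hq h => hX p hp q hq (Or.inr h))
    exact_mod_cast h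

lemma abs_sub_le_iSup (u₁ u₂ : I → J → ℝ) (p : I × J) :
    |u₁ p.1 p.2 - u₂ p.1 p.2| ≤ ⨆ p : I × J, |u₁ p.1 p.2 - u₂ p.1 p.2| :=
  le_ciSup (f := fun p : I × J => |u₁ p.1 p.2 - u₂ p.1 p.2|) (Set.finite_range _).bddAbove p

lemma matchValue_le_add (u₁ v₁ u₂ v₂ : I → J → ℝ) {X : Finset (I × J)} (hX : IsMatching X) :
    matchValue u₁ v₁ X ≤ matchValue u₂ v₂ X +
      min (Fintype.card I : ℝ) (Fintype.card J : ℝ) *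
        ((⨆ p : I × J, |u₁ p.1 p.2 - u₂ p.1 p.2|) + ⨆ p : I × J, |v₁ p.1 p.2 - v₂ p.1 p.2|) := by
  set D := (⨆ p : I × J, |u₁ p.1 p.2 - u₂ p.1 p.2|) + ⨆ p : I × J, |v₁ p.1 p.2 - v₂ p.1 p.2|
    with hD
  -- This also covers an empty `I × J`, where the suprema take the value `0`.
  have hD0 : 0 ≤ D :=
    add_nonneg (Real.iSup_nonneg fun _ => abs_nonneg _) (Real.iSup_nonneg fun _ => abs_nonneg _)
  have hpair : matchValue u₁ v₁ X ≤ matchValue u₂ v₂ X + X.card * D := by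
    unfold matchValue
    rw [← nsmul_eq_mul, ← Finset.sum_const, ← Finset.sum_add_distrib]
    refine Finset.sum_le_sum fun p _ => ?_
    have hu := (le_abs_self _).trans (abs_sub_le_iSup u₁ u₂ p)
    have hv := (le_abs_self _).trans (abs_sub_le_iSup v₁ v₂ p)
    linarith
  have hcard := mul_le_mul_of_nonneg_right hX.card_le hD0
  linarith

lemma maxMatchVal_le_add (u₁ v₁ u₂ v₂ : I → J → ℝ) :
    maxMatchVal u₁ v₁ Finset.univ Finset.univ ≤ maxMatchVal u₂ v₂ Finset.univ Finset.univ +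
      min (Fintype.card I : ℝ) (Fintype.card J : ℝ) *
        ((⨆ p : I × J, |u₁ p.1 p.2 - u₂ p.1 p.2|) + ⨆ p : I × J, |v₁ p.1 p.2 - v₂ p.1 p.2|) := by
  refine Finset.sup'_le _ _ fun X hX => ?_
  have h := matchValue_le_add u₁ v₁ u₂ v₂ (Finset.mem_filter.1 hX).2
  have hsup : matchValue u₂ v₂ X ≤ maxMatchVal u₂ v₂ Finset.univ Finset.univ :=
    Finset.le_sup' (matchValue u₂ v₂) hX
  linarith

/-- the max-weight matching value is Lipschitz in the utilities
with respect to the sup norm. -/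
theorem maxMatchVal_lipschitz (u₁ v₁ u₂ v₂ : I → J → ℝ) :
    |maxMatchVal u₁ v₁ Finset.univ Finset.univ - maxMatchVal u₂ v₂ Finset.univ Finset.univ| ≤
      (min (Fintype.card I) (Fintype.card J) : ℝ) *
        ((⨆ p : I × J, |u₁ p.1 p.2 - u₂ p.1 p.2|) + ⨆ p : I × J, |v₁ p.1 p.2 - v₂ p.1 p.2|) := by
  have h₁ := maxMatchVal_le_add u₁ v₁ u₂ v₂
  have h₂ := maxMatchVal_le_add u₂ v₂ u₁ v₁
  simp only [abs_sub_comm (u₂ _ _), abs_sub_comm (v₂ _ _)] at h₂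
  rw [abs_sub_le_iff]
  constructor <;> linarith
end
end

section
/- Let d ≥ 1, λ > 0, and let x₁, …, x_{k−1} ∈ ℝ^d. Define Λ_k = λ I_d + Σ_{t=1}^{k−1} x_t x_tᵀ. Then Σ_{t=1}^{k−1} x_tᵀ (Λ_k)⁻¹ x_t ≤ d. -/
open Matrix

/-!
Write `Λ = λ I + G` with `G = ∑ₛ xₛ xₛᵀ`. Each summand is a trace, `xₜᵀ Λ⁻¹ xₜ = tr (Λ⁻¹ xₜ xₜᵀ)`,
so the sum equals `tr (Λ⁻¹ G) = tr (Λ⁻¹ (Λ - λ I)) = d - λ tr Λ⁻¹`. As `Λ` is positive definite,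
so is `Λ⁻¹`, and its trace is nonnegative.
-/

/-- `∑_t xₜᵀ Λ⁻¹ xₜ ≤ d` where `Λ = λ I + ∑_t xₜ xₜᵀ`. -/
theorem sum_quadratic_inv_gram_le_dim (d n : ℕ) (hd : 1 ≤ d) (lam : ℝ) (hlam : 0 < lam)
    (x : Fin n → Fin d → ℝ) :
    ∑ t : Fin n,
        x t ⬝ᵥ (((lam • (1 : Matrix (Fin d) (Fin d) ℝ)
          + ∑ s : Fin n, vecMulVec (x s) (x s))⁻¹) *ᵥ x t) ≤ (d : ℝ) := by
  set G : Matrix (Fin d) (Fin d) ℝ := ∑ s : Fin n, vecMulVec (x s) (x s) with hG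
  set L : Matrix (Fin d) (Fin d) ℝ := lam • (1 : Matrix (Fin d) (Fin d) ℝ) + G with hL
  have hGpos : G.PosSemidef :=
    posSemidef_sum _ fun s _ => by simpa using posSemidef_vecMulVec_self_star (x s)
  have hLpos : L.PosDef := (PosDef.one.smul hlam).add_posSemidef hGpos
  have hsum : ∑ t : Fin n, x t ⬝ᵥ (L⁻¹ *ᵥ x t) = (L⁻¹ * G).trace := by
    rw [hG, Finset.mul_sum, trace_sum]
    refine Finset.sum_congr rfl fun t _ => ?_
    rw [mul_vecMulVec, trace_vecMulVec, dotProduct_comm]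
  have hmul : L⁻¹ * G = 1 - lam • L⁻¹ := by
    have hGL : G = L - lam • 1 := by rw [hL, add_sub_cancel_left]
    rw [hGL, mul_sub, nonsing_inv_mul _ ((isUnit_iff_isUnit_det L).mp hLpos.isUnit),
      mul_smul_comm, mul_one]
  have htr : 0 ≤ L⁻¹.trace := hLpos.inv.posSemidef.trace_nonneg
  rw [hsum, hmul, trace_sub, trace_one, trace_smul, Fintype.card_fin, smul_eq_mul]
  linarith [mul_nonneg hlam.le htr]
end

section
/- (Elliptical potential lemma) Let d ≥ 1, λ > 0, and let x₁, …, x_k ∈ ℝ^d with ‖x_t‖₂ ≤ 1 for all t. Define Λ_t = λ I_d + Σ_{s=1}^{t−1} x_s x_sᵀ. Then Σ_{t=1}^{k} ‖x_t‖_{(Λ_{t+1})⁻¹} ≤ √( k d log( (k + dλ) / (dλ) ) ). -/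
/-!
Write `Λ_t = λ I + ∑_{s < t} x_s x_sᵀ` and `u_t = x_tᵀ Λ_{t+1}⁻¹ x_t`. Since
`Λ_t = Λ_{t+1} - x_t x_tᵀ`, the matrix determinant lemma gives
`det Λ_t = det Λ_{t+1} (1 - u_t)`. Both determinants are positive, so `1 - u_t > 0` and
`u_t ≤ -log (1 - u_t) = log det Λ_{t+1} - log det Λ_t` (`quad_le_log_det_sub`).
The sum of the `u_t` telescopes to `log det Λ_k - d log λ`. By AM-GM on the eigenvalues
(`log_det_le`), `log det Λ_k ≤ d log m` whenever `tr Λ_k ≤ d m`; as every `‖x_t‖ ≤ 1`, one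
can take `m = λ + k / d`. Cauchy-Schwarz passes from `∑ u_t` to `∑ √u_t`.
-/

open Matrix

/-- The regularized Gram matrix `Λ = λ I + ∑_{s < t} x_s x_sᵀ` of the first `t` vectors. -/
def gramReg {d : ℕ} (lam : ℝ) (x : ℕ → Fin d → ℝ) (t : ℕ) : Matrix (Fin d) (Fin d) ℝ :=
  lam • (1 : Matrix (Fin d) (Fin d) ℝ) + ∑ s ∈ Finset.range t, vecMulVec (x s) (x s)

lemma gramReg_posDef {d : ℕ} {lam : ℝ} (hlam : 0 < lam) (x : ℕ → Fin d → ℝ) (t : ℕ) :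
    (gramReg lam x t).PosDef := by
  refine (PosDef.one.smul hlam).add_posSemidef (posSemidef_sum _ fun s _ => ?_)
  simpa using posSemidef_vecMulVec_self_star (x s)

/-- Matrix determinant lemma, read backwards from `M` to its rank-one downdate `M - v vᵀ`. -/
lemma det_sub_vecMulVec {d : ℕ} {M : Matrix (Fin d) (Fin d) ℝ} (hM : IsUnit M.det)
    (v : Fin d → ℝ) :
    (M - vecMulVec v v).det = M.det * (1 - v ⬝ᵥ (M⁻¹ *ᵥ v)) := by
  have h := det_add_replicateCol_mul_replicateRow (ι := Unit) hM (-v) v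
  rw [← vecMulVec_eq, neg_vecMulVec, ← sub_eq_add_neg] at h
  rw [h, det_unique (n := Unit), Matrix.mul_assoc, ← replicateCol_mulVec]
  simp [mulVec_neg, sub_eq_add_neg]

lemma quad_le_log_det_sub {d : ℕ} {lam : ℝ} (hlam : 0 < lam) (x : ℕ → Fin d → ℝ) (t : ℕ) :
    x t ⬝ᵥ ((gramReg lam x (t + 1))⁻¹ *ᵥ x t) ≤
      Real.log (gramReg lam x (t + 1)).det - Real.log (gramReg lam x t).det := by
  have h1 := (gramReg_posDef hlam x (t + 1)).det_pos
  have h0 := (gramReg_posDef hlam x t).det_pos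
  have hdet := det_sub_vecMulVec (isUnit_iff_ne_zero.mpr h1.ne') (x t)
  have hsub : gramReg lam x (t + 1) - vecMulVec (x t) (x t) = gramReg lam x t := by
    simp only [gramReg, Finset.sum_range_succ]
    abel
  rw [hsub] at hdet
  have hu : 0 < 1 - x t ⬝ᵥ ((gramReg lam x (t + 1))⁻¹ *ᵥ x t) := by
    rw [hdet] at h0
    exact pos_of_mul_pos_right h0 h1.le
  rw [hdet, Real.log_mul h1.ne' hu.ne']
  linarith [Real.log_le_sub_one_of_pos hu]

/-- AM-GM for eigenvalues in logarithmic form, using the tangent line of `log` at `m`. -/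
lemma log_det_le {d : ℕ} {M : Matrix (Fin d) (Fin d) ℝ} (hM : M.PosDef) {m : ℝ} (hm : 0 < m)
    (htr : M.trace ≤ d * m) : Real.log M.det ≤ d * Real.log m := by
  have hdet := hM.isHermitian.det_eq_prod_eigenvalues
  have htrace := hM.isHermitian.trace_eq_sum_eigenvalues
  simp only [RCLike.ofReal_real_eq_id, id_eq] at hdet htrace
  rw [hdet, Real.log_prod fun i _ => (hM.eigenvalues_pos i).ne']
  calc ∑ i, Real.log (hM.isHermitian.eigenvalues i)
      ≤ ∑ i, (Real.log m + (hM.isHermitian.eigenvalues i / m - 1)) := by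
        refine Finset.sum_le_sum fun i _ => ?_
        have hi := hM.eigenvalues_pos i
        have h := Real.log_le_sub_one_of_pos (div_pos hi hm)
        rw [Real.log_div hi.ne' hm.ne'] at h
        linarith
    _ = d * Real.log m + (M.trace / m - d) := by
        rw [htrace, Finset.sum_add_distrib, Finset.sum_sub_distrib, ← Finset.sum_div]
        simp
    _ ≤ d * Real.log m := by
        have : M.trace / m ≤ d := (div_le_iff₀ hm).mpr htr
        linarith

/-- the elliptical potential lemma. `Λ_{t+1} = λ I + ∑_{s ≤ t} x_s x_sᵀ`
(with `x` indexed from `0`, so the summand of index `t` uses `∑_{s < t+1}`). -/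
theorem elliptical_potential (d k : ℕ) (hd : 1 ≤ d) (lam : ℝ) (hlam : 0 < lam)
    (x : ℕ → Fin d → ℝ) (hx : ∀ t, Real.sqrt (x t ⬝ᵥ x t) ≤ 1) :
    ∑ t ∈ Finset.range k,
        Real.sqrt (x t ⬝ᵥ (((lam • (1 : Matrix (Fin d) (Fin d) ℝ)
          + ∑ s ∈ Finset.range (t + 1), vecMulVec (x s) (x s))⁻¹) *ᵥ x t)) ≤
      Real.sqrt (k * d * Real.log ((k + d * lam) / (d * lam))) := by
  change ∑ t ∈ Finset.range k,
    Real.sqrt (x t ⬝ᵥ ((gramReg lam x (t + 1))⁻¹ *ᵥ x t)) ≤ _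
  have hd0 : (0 : ℝ) < d := by exact_mod_cast hd
  have hm : (0 : ℝ) < (k + d * lam) / d := by positivity
  have hnonneg (t : ℕ) : 0 ≤ x t ⬝ᵥ ((gramReg lam x (t + 1))⁻¹ *ᵥ x t) := by
    simpa using (gramReg_posDef hlam x (t + 1)).inv.posSemidef.dotProduct_mulVec_nonneg (x t)
  have htr : (gramReg lam x k).trace ≤ d * ((k + d * lam) / d) := by
    have hsum : ∑ s ∈ Finset.range k, x s ⬝ᵥ x s ≤ k := by
      calc ∑ s ∈ Finset.range k, x s ⬝ᵥ x s ≤ ∑ s ∈ Finset.range k, (1 : ℝ) :=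
            Finset.sum_le_sum fun s _ => by simpa using hx s
        _ = k := by simp
    rw [mul_div_cancel₀ _ hd0.ne']
    simp only [gramReg, trace_add, trace_smul, trace_one, trace_sum, trace_vecMulVec,
      Fintype.card_fin, smul_eq_mul]
    linarith
  have hdet0 : Real.log (gramReg lam x 0).det = d * Real.log lam := by
    simp [gramReg]
  have hpot : ∑ t ∈ Finset.range k, x t ⬝ᵥ ((gramReg lam x (t + 1))⁻¹ *ᵥ x t) ≤
      d * Real.log ((k + d * lam) / (d * lam)) := by
    calc _ ≤ ∑ t ∈ Finset.range k,
          (Real.log (gramReg lam x (t + 1)).det - Real.log (gramReg lam x t).det) :=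
          Finset.sum_le_sum fun t _ => quad_le_log_det_sub hlam x t
      _ = Real.log (gramReg lam x k).det - d * Real.log lam := by
          rw [Finset.sum_range_sub (fun t => Real.log (gramReg lam x t).det), hdet0]
      _ ≤ d * Real.log ((k + d * lam) / d) - d * Real.log lam := by
          linarith [log_det_le (gramReg_posDef hlam x k) hm htr]
      _ = _ := by rw [← mul_sub, ← Real.log_div hm.ne' hlam.ne', div_div]
  apply Real.le_sqrt_of_sq_le
  calc _ ≤ (k : ℝ) * ∑ t ∈ Finset.range k,
        Real.sqrt (x t ⬝ᵥ ((gramReg lam x (t + 1))⁻¹ *ᵥ x t)) ^ 2 := by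
        simpa using sq_sum_le_card_mul_sum_sq (s := Finset.range k)
          (f := fun t => Real.sqrt (x t ⬝ᵥ ((gramReg lam x (t + 1))⁻¹ *ᵥ x t)))
    _ = (k : ℝ) * ∑ t ∈ Finset.range k, x t ⬝ᵥ ((gramReg lam x (t + 1))⁻¹ *ᵥ x t) := by
        simp only [Real.sq_sqrt (hnonneg _)]
    _ ≤ k * (d * Real.log ((k + d * lam) / (d * lam))) := by gcongr
    _ = _ := by ring
end

section
/- (Covering number of the regularized linear function class) Let S be a set, d ≥ 1, and ψ : S → ℝ^d with ‖ψ(s)‖₂ ≤ 1 for all s ∈ S. Fix L > 0, B ≥ 0, λ > 0, and ε > 0. Let 𝒢 be the class of functions g : S → ℝ of the form g(s) = ψ(s)ᵀ w + β √( ψ(s)ᵀ Λ⁻¹ ψ(s) ), where ‖w‖₂ ≤ L, β ∈ [0, B], and Λ is a symmetric d × d matrix with smallest eigenvalue at least λ. Then there exists a finite set 𝒞 of functions from S to ℝ with |𝒞| ≤ (1 + 4L/ε)^d · (1 + 8 √d B² / (λ ε²))^{d²} such that every g ∈ 𝒢 satisfies sup_{s ∈ S} |g(s) − g'(s)| ≤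 ε for some g' ∈ 𝒞. -/
/-!
For `β ≥ 0` the bonus term is `β √(ψᵀ Λ⁻¹ ψ) = √(ψᵀ A ψ)` with `A = β² Λ⁻¹`, so a function of the
class is determined by the pair `(w, A)`. Since `Λ ⪰ λ I`, every column of `Λ⁻¹` has Euclidean
norm at most `1 / λ`, hence `A` lies in the Frobenius ball of radius `√d B² / λ`
(`frobenius_sq_inv_le`). From `|√a - √b| ≤ √|a - b|` (`abs_sqrt_sub_sqrt_le`) and
Cauchy–Schwarz, moving `w` by `ε / 2` and `A` by `ε² / 4` (in Frobenius norm) moves the function by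
at most `ε` in sup norm. A ball of radius `R` in a space of dimension `n` has a `δ`-net of
cardinality at most `(1 + 2 R / δ) ^ n`, by the usual volume comparison for a maximal
`δ`-separated subset (`exists_net`); applying this in dimensions `d` and `d²` yields the bound.
The matrices of the net need not be positive semidefinite, because `Real.sqrt` vanishes on
negative numbers and the square-root estimate holds on all of `ℝ`.
-/

open Matrix

open MeasureTheory Module Metric in
/-- Volume comparison: the balls of radius `δ / 2` around the points of `s` are disjoint and
contained in the ball of radius `R + δ / 2`. -/
lemma card_le_of_separated {E : Type*} [NormedAddCommGroup E] [NormedSpace ℝ E]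
    [FiniteDimensional ℝ E] {R δ : ℝ} (hR : 0 ≤ R) (hδ : 0 < δ) (s : Finset E)
    (hs : ∀ c ∈ s, ‖c‖ ≤ R) (h : ∀ c ∈ s, ∀ e ∈ s, c ≠ e → δ ≤ ‖c - e‖) :
    (s.card : ℝ) ≤ (1 + 2 * R / δ) ^ finrank ℝ E := by
  borelize E
  let μ : Measure E := Measure.addHaar
  have hδ2 : 0 < δ / 2 := by positivity
  have hρ : 0 < R + δ / 2 := by positivity
  have hdisj : Set.Pairwise (s : Set E) (Function.onFun Disjoint fun c => ball c (δ / 2)) := by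
    intro c hc e he hce
    apply ball_disjoint_ball
    rw [dist_eq_norm]
    linarith [h c hc e he hce]
  have hsub : (⋃ c ∈ s, ball c (δ / 2)) ⊆ ball (0 : E) (R + δ / 2) := by
    refine Set.iUnion₂_subset fun c hc => ball_subset_ball' ?_
    rw [dist_zero_right]
    linarith [hs c hc]
  have I : (s.card : ENNReal) * ENNReal.ofReal ((δ / 2) ^ finrank ℝ E) * μ (ball 0 1) ≤
      ENNReal.ofReal ((R + δ / 2) ^ finrank ℝ E) * μ (ball 0 1) :=
    calc
      _ = μ (⋃ c ∈ s, ball c (δ / 2)) := by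
        rw [measure_biUnion_finset hdisj fun c _ => measurableSet_ball]
        simp only [μ.addHaar_ball_of_pos _ hδ2, Finset.sum_const, nsmul_eq_mul, mul_assoc]
      _ ≤ μ (ball (0 : E) (R + δ / 2)) := measure_mono hsub
      _ = _ := by simp only [μ.addHaar_ball_of_pos _ hρ]
  have J := (ENNReal.mul_le_mul_iff_left (measure_ball_pos μ _ zero_lt_one).ne'
    measure_ball_lt_top.ne).1 I
  have K : (s.card : ℝ) * (δ / 2) ^ finrank ℝ E ≤ (R + δ / 2) ^ finrank ℝ E := by
    have := ENNReal.toReal_le_of_le_ofReal (pow_nonneg hρ.le _) J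
    rwa [ENNReal.toReal_mul, ENNReal.toReal_natCast,
      ENNReal.toReal_ofReal (pow_nonneg hδ2.le _)] at this
  have e : 1 + 2 * R / δ = (R + δ / 2) / (δ / 2) := by
    field_simp
    ring
  rwa [e, div_pow, le_div_iff₀ (pow_pos hδ2 _)]

/-- A `δ`-separated subset of the ball of maximal cardinality is a `δ`-net. -/
lemma exists_net (E : Type*) [NormedAddCommGroup E] [NormedSpace ℝ E]
    [FiniteDimensional ℝ E] {R δ : ℝ} (hR : 0 ≤ R) (hδ : 0 < δ) :
    ∃ s : Finset E, (s.card : ℝ) ≤ (1 + 2 * R / δ) ^ Module.finrank ℝ E ∧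
      ∀ x : E, ‖x‖ ≤ R → ∃ c ∈ s, ‖x - c‖ ≤ δ := by
  classical
  let P : ℕ → Prop := fun n => ∃ s : Finset E, s.card = n ∧ (∀ c ∈ s, ‖c‖ ≤ R) ∧
    ∀ c ∈ s, ∀ e ∈ s, c ≠ e → δ ≤ ‖c - e‖
  have hP : ∀ n, P n → n ≤ ⌊(1 + 2 * R / δ) ^ Module.finrank ℝ E⌋₊ := by
    rintro n ⟨s, rfl, h1, h2⟩
    exact Nat.le_floor (card_le_of_separated hR hδ s h1 h2)
  have h0 : P 0 := ⟨∅, by simp⟩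
  obtain ⟨s, hcard, h1, h2⟩ := Nat.findGreatest_spec (P := P) (Nat.zero_le _) h0
  refine ⟨s, card_le_of_separated hR hδ s h1 h2, fun x hx => ?_⟩
  by_contra! hfar
  have hxs : x ∉ s := fun hx' => by
    have := hfar x hx'
    simp only [sub_self, norm_zero] at this
    linarith
  have hP' : P (s.card + 1) := by
    refine ⟨insert x s, Finset.card_insert_of_notMem hxs, ?_, ?_⟩
    · intro c hc
      rcases Finset.mem_insert.1 hc with rfl | hc
      exacts [hx, h1 c hc]
    · intro c hc e he hce
      rcases Finset.mem_insert.1 hc with rfl | hcs <;> rcases Finset.mem_insert.1 he with rfl | hes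
      · exact absurd rfl hce
      · exact (hfar e hes).le
      · rw [norm_sub_rev]
        exact (hfar c hcs).le
      · exact h2 c hcs e hes hce
  exact absurd ((Nat.le_findGreatest (hP _ hP') hP').trans hcard.ge) (by simp)

/-- The square root is `1/2`-Hölder on all of `ℝ`, with the convention `√x = 0` for `x < 0`. -/
lemma abs_sqrt_sub_sqrt_le {a b η : ℝ} (hη : 0 ≤ η) (h : |a - b| ≤ η ^ 2) :
    |Real.sqrt a - Real.sqrt b| ≤ η := by
  have key : ∀ x y : ℝ, x ≤ y + η ^ 2 → Real.sqrt x ≤ Real.sqrt y + η := by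
    intro x y hxy
    apply Real.sqrt_le_iff.2 ⟨by positivity, ?_⟩
    rcases le_total 0 y with hy | hy
    · nlinarith [Real.sq_sqrt hy, mul_nonneg (Real.sqrt_nonneg y) hη]
    · nlinarith [sq_nonneg (Real.sqrt y), mul_nonneg (Real.sqrt_nonneg y) hη]
  rw [abs_le] at h ⊢
  constructor
  · linarith [key b a (by linarith)]
  · linarith [key a b (by linarith)]

lemma dotProduct_self_eq_sum_sq {ι : Type*} [Fintype ι] (v : ι → ℝ) :
    v ⬝ᵥ v = ∑ i, v i ^ 2 := by
  simp [dotProduct, sq]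

/-- The Frobenius norm of `Λ⁻¹` is at most `√d / λ`. Each column `y = Λ⁻¹ eⱼ` satisfies
`λ ‖y‖² ≤ yᵀ Λ y = yⱼ ≤ ‖y‖`, so `‖y‖ ≤ 1 / λ`. -/
lemma frobenius_sq_inv_le {d : ℕ} {lam : ℝ} (hlam : 0 < lam) (Λ : Matrix (Fin d) (Fin d) ℝ)
    (h : (Λ - lam • (1 : Matrix (Fin d) (Fin d) ℝ)).PosSemidef) :
    ∑ i, ∑ j, (Λ⁻¹ i j) ^ 2 ≤ d / lam ^ 2 := by
  have hpd : Λ.PosDef := by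
    have h1 : (lam • (1 : Matrix (Fin d) (Fin d) ℝ)).PosDef := PosDef.one.smul hlam
    simpa using PosDef.posSemidef_add h h1
  have hdet : IsUnit Λ.det := hpd.det_pos.ne'.isUnit
  have hcol : ∀ j, ∑ i, (Λ⁻¹ i j) ^ 2 ≤ 1 / lam ^ 2 := by
    intro j
    set y : Fin d → ℝ := fun i => Λ⁻¹ i j with hy
    have hΛy : Λ *ᵥ y = Pi.single j 1 := by
      have : y = Λ⁻¹ *ᵥ Pi.single j 1 := by
        ext i
        simp [hy]
      rw [this, mulVec_mulVec, mul_nonsing_inv _ hdet, one_mulVec]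
    have hq : 0 ≤ y j - lam * ∑ i, y i ^ 2 := by
      have := h.dotProduct_mulVec_nonneg y
      rw [sub_mulVec, hΛy, dotProduct_sub, smul_mulVec, one_mulVec, dotProduct_smul] at this
      simpa [dotProduct_self_eq_sum_sq] using this
    have hyj : y j ^ 2 ≤ ∑ i, y i ^ 2 :=
      Finset.single_le_sum (f := fun i => y i ^ 2) (fun i _ => sq_nonneg _) (Finset.mem_univ j)
    change ∑ i, y i ^ 2 ≤ _
    set q := ∑ i, y i ^ 2
    have hq0 : 0 ≤ q := (sq_nonneg _).trans hyj
    rw [le_div_iff₀ (by positivity)]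
    -- With `q = ‖y‖²`: `(λ q)² ≤ yⱼ² ≤ q`.
    have hsq : (lam * q) ^ 2 ≤ q :=
      (pow_le_pow_left₀ (by positivity) (by linarith) 2).trans hyj
    rcases hq0.eq_or_lt with h0 | h0
    · rw [← h0]
      simp
    · by_contra! hcon
      nlinarith
  rw [Finset.sum_comm]
  calc ∑ j, ∑ i, (Λ⁻¹ i j) ^ 2 ≤ ∑ _j : Fin d, 1 / lam ^ 2 := Finset.sum_le_sum fun j _ => hcol j
    _ = d / lam ^ 2 := by simp [div_eq_mul_inv]

/-- Cauchy–Schwarz for the Frobenius inner product: `xᵀ M x = ⟨M, x xᵀ⟩` and `‖x xᵀ‖ = ‖x‖²`. -/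
lemma abs_quadForm_le {d : ℕ} (M : Matrix (Fin d) (Fin d) ℝ) (x : Fin d → ℝ) {η : ℝ} (hη : 0 ≤ η)
    (hx : x ⬝ᵥ x ≤ 1) (hM : ∑ i, ∑ j, (M i j) ^ 2 ≤ η ^ 2) : |x ⬝ᵥ (M *ᵥ x)| ≤ η := by
  have e : x ⬝ᵥ (M *ᵥ x) = ∑ p : Fin d × Fin d, M p.1 p.2 * (x p.1 * x p.2) := by
    rw [Fintype.sum_prod_type]
    simp only [dotProduct, mulVec, Finset.mul_sum]
    exact Finset.sum_congr rfl fun i _ => Finset.sum_congr rfl fun j _ => by ring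
  have cs := Finset.sum_mul_sq_le_sq_mul_sq Finset.univ
    (fun p : Fin d × Fin d => M p.1 p.2) (fun p => x p.1 * x p.2)
  have ex : ∑ p : Fin d × Fin d, (x p.1 * x p.2) ^ 2 = (x ⬝ᵥ x) ^ 2 := by
    rw [dotProduct_self_eq_sum_sq, sq (∑ i, x i ^ 2), Finset.sum_mul_sum, Fintype.sum_prod_type]
    simp only [mul_pow]
  rw [← e, ex, Fintype.sum_prod_type] at cs
  have hx0 : 0 ≤ x ⬝ᵥ x := by
    rw [dotProduct_self_eq_sum_sq]
    positivity
  apply abs_le_of_sq_le_sq _ hη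
  calc _ ≤ _ := cs
    _ ≤ η ^ 2 * 1 := by
        gcongr
        exact pow_le_one₀ hx0 hx
    _ = η ^ 2 := mul_one _

lemma abs_dotProduct_le {d : ℕ} (x v : Fin d → ℝ) {η : ℝ} (hη : 0 ≤ η)
    (hx : x ⬝ᵥ x ≤ 1) (hv : ∑ i, v i ^ 2 ≤ η ^ 2) : |x ⬝ᵥ v| ≤ η := by
  have cs := Finset.sum_mul_sq_le_sq_mul_sq Finset.univ x v
  rw [dotProduct_self_eq_sum_sq] at hx
  apply abs_le_of_sq_le_sq _ hη
  calc _ ≤ _ := cs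
    _ ≤ 1 * η ^ 2 := by gcongr
    _ = η ^ 2 := one_mul _

/-- covering number of the regularized linear function class
`g(s) = ψ(s)ᵀ w + β ‖ψ(s)‖_{Λ⁻¹}` with `‖w‖₂ ≤ L`, `β ∈ [0, B]`, and
`λ_min(Λ) ≥ λ` (expressed as `Λ - λ I ⪰ 0` for symmetric `Λ`). -/
theorem covering_regularized_linear_class (S : Type*) (d : ℕ) (hd : 1 ≤ d)
    (ψ : S → Fin d → ℝ) (hψ : ∀ s, Real.sqrt (ψ s ⬝ᵥ ψ s) ≤ 1)
    (L B lam ε : ℝ) (hL : 0 < L) (hB : 0 ≤ B) (hlam : 0 < lam) (hε : 0 < ε) :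
    ∃ C : Finset (S → ℝ),
      (C.card : ℝ) ≤ (1 + 4 * L / ε) ^ d *
          (1 + 8 * Real.sqrt d * B ^ 2 / (lam * ε ^ 2)) ^ (d ^ 2) ∧
      ∀ g : S → ℝ,
        (∃ (w : Fin d → ℝ) (β : ℝ) (Λ : Matrix (Fin d) (Fin d) ℝ),
            Real.sqrt (w ⬝ᵥ w) ≤ L ∧ 0 ≤ β ∧ β ≤ B ∧ Λ.IsSymm ∧
            (Λ - lam • (1 : Matrix (Fin d) (Fin d) ℝ)).PosSemidef ∧
            g = fun s => ψ s ⬝ᵥ w + β * Real.sqrt (ψ s ⬝ᵥ (Λ⁻¹ *ᵥ ψ s))) →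
        ∃ g' ∈ C, ∀ s, |g s - g' s| ≤ ε := by
  classical
  obtain ⟨N₁, hN₁, hc₁⟩ := exists_net (EuclideanSpace ℝ (Fin d)) hL.le (half_pos hε)
  have hR : 0 ≤ Real.sqrt d * B ^ 2 / lam := by positivity
  have hδ : 0 < ε ^ 2 / 4 := by positivity
  obtain ⟨N₂, hN₂, hc₂⟩ := exists_net (EuclideanSpace ℝ (Fin d × Fin d)) hR hδ
  rw [finrank_euclideanSpace, Fintype.card_fin] at hN₁
  rw [finrank_euclideanSpace, Fintype.card_prod, Fintype.card_fin, ← sq] at hN₂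
  have e₁ : 1 + 2 * L / (ε / 2) = 1 + 4 * L / ε := by
    field_simp
    ring
  have e₂ : 1 + 2 * (Real.sqrt d * B ^ 2 / lam) / (ε ^ 2 / 4) =
      1 + 8 * Real.sqrt d * B ^ 2 / (lam * ε ^ 2) := by
    field_simp
    ring
  rw [e₁] at hN₁
  rw [e₂] at hN₂
  let F : EuclideanSpace ℝ (Fin d) × EuclideanSpace ℝ (Fin d × Fin d) → S → ℝ := fun p s =>
    ψ s ⬝ᵥ (fun i => p.1 i) +
      Real.sqrt (ψ s ⬝ᵥ ((Matrix.of fun i j => p.2 (i, j)) *ᵥ ψ s))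
  refine ⟨(N₁ ×ˢ N₂).image F, ?_, ?_⟩
  · calc (((N₁ ×ˢ N₂).image F).card : ℝ) ≤ ((N₁ ×ˢ N₂).card : ℝ) := by
          exact_mod_cast Finset.card_image_le
      _ = (N₁.card : ℝ) * N₂.card := by
          rw [Finset.card_product]
          push_cast
          rfl
      _ ≤ _ := by gcongr
  rintro g ⟨w, β, Λ, hw, hβ0, hβB, -, hΛ, rfl⟩
  obtain ⟨u, hu, hwu⟩ := hc₁ (WithLp.toLp 2 w) (by
    rw [EuclideanSpace.norm_eq]
    simpa [dotProduct_self_eq_sum_sq] using hw)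
  obtain ⟨a, ha, hAa⟩ := hc₂ (WithLp.toLp 2 fun p => β ^ 2 * Λ⁻¹ p.1 p.2) (by
    rw [EuclideanSpace.norm_eq]
    apply Real.sqrt_le_iff.2 ⟨hR, ?_⟩
    simp only [Real.norm_eq_abs, sq_abs, Fintype.sum_prod_type, mul_pow, ← Finset.mul_sum]
    calc (β ^ 2) ^ 2 * ∑ i, ∑ j, (Λ⁻¹ i j) ^ 2 ≤ (B ^ 2) ^ 2 * (d / lam ^ 2) := by
          gcongr
          exact frobenius_sq_inv_le hlam Λ hΛ
      _ = (Real.sqrt d * B ^ 2 / lam) ^ 2 := by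
          rw [div_pow, mul_pow, Real.sq_sqrt (Nat.cast_nonneg d)]
          ring)
  refine ⟨F (u, a), Finset.mem_image_of_mem F (Finset.mk_mem_product hu ha), fun s => ?_⟩
  have hψs : ψ s ⬝ᵥ ψ s ≤ 1 := by
    have := (Real.sqrt_le_iff.1 (hψ s)).2
    simpa using this
  rw [EuclideanSpace.norm_eq] at hwu hAa
  have hwu' := (Real.sqrt_le_iff.1 hwu).2
  have hAa' := (Real.sqrt_le_iff.1 hAa).2
  simp only [Real.norm_eq_abs, sq_abs, PiLp.sub_apply, Fintype.sum_prod_type] at hwu' hAa'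
  have hlin : |ψ s ⬝ᵥ w - ψ s ⬝ᵥ (fun i => u i)| ≤ ε / 2 := by
    rw [← dotProduct_sub]
    exact abs_dotProduct_le _ _ (by positivity) hψs hwu'
  have hroot : β * Real.sqrt (ψ s ⬝ᵥ (Λ⁻¹ *ᵥ ψ s)) =
      Real.sqrt (ψ s ⬝ᵥ ((β ^ 2 • Λ⁻¹) *ᵥ ψ s)) := by
    rw [smul_mulVec, dotProduct_smul, smul_eq_mul, Real.sqrt_mul (sq_nonneg β), Real.sqrt_sq hβ0]
  have hquad : |Real.sqrt (ψ s ⬝ᵥ ((β ^ 2 • Λ⁻¹) *ᵥ ψ s)) -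
      Real.sqrt (ψ s ⬝ᵥ ((Matrix.of fun i j => a (i, j)) *ᵥ ψ s))| ≤ ε / 2 := by
    apply abs_sqrt_sub_sqrt_le (by positivity)
    rw [← dotProduct_sub, ← sub_mulVec, show (ε / 2) ^ 2 = ε ^ 2 / 4 by ring]
    exact abs_quadForm_le _ _ hδ.le hψs hAa'
  simp only [F]
  rw [hroot]
  rw [abs_le] at hlin hquad ⊢
  constructor <;> linarith [hlin.1, hlin.2, hquad.1, hquad.2]
end
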